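/- Let P be a probability measure on ℝ^d, σ > 0, let p_σ be the density of the Gaussian perturbation of P with variance σ², and let P̃_σ(·|x) be the tilted conditional measure dP̃_σ(y|x) ∝ exp(−‖x−y‖²/(2σ²)) dP(y). Then: (1) for every x ∈ ℝ^d, ∇²log p_σ(x) = Var_{y∼P̃_σ(·|x)}(y/σ²) − I_d/σ², where Var denotes the covariance matrix; and (2) if moreover P admits a density p ∈ C²(ℝ^d) (with the integration by parts justified, e.g. p, ∇p, ∇²p integrable against the Gaussian kernel), then ∇²log p_σ(x) = E_{y∼P̃_σ(·|x)}[∇²log p(y)] + Var_{y∼P̃_σ(·|x)}(∇log p(y)). -/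

import Mathlib

open MeasureTheory Real

noncomputable section

namespace DiffusionKL

/-- Euclidean space `ℝ^d`. -/
abbrev Vec (d : ℕ) := EuclideanSpace ℝ (Fin d)

/-- Density of the isotropic Gaussian `N(m, v·I_d)` on `ℝ^d`. -/
def gaussDensity (d : ℕ) (m : Vec d) (v : ℝ) (x : Vec d) : ℝ :=
  (2 * π * v) ^ (-(d : ℝ) / 2) * Real.exp (-‖x - m‖ ^ 2 / (2 * v))

/-- The isotropic Gaussian measure `N(m, v·I_d)` on `ℝ^d`. -/
def gaussMeasure (d : ℕ) (m : Vec d) (v : ℝ) : Measure (Vec d) :=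
  MeasureTheory.volume.withDensity (fun x => ENNReal.ofReal (gaussDensity d m v x))

/-- The standard Gaussian measure `γ_d = N(0, I_d)` on `ℝ^d`. -/
def stdGauss (d : ℕ) : Measure (Vec d) := gaussMeasure d 0 1

/-- Kullback-Leibler divergence `KL(μ ‖ ν) = ∫ log (dμ/dν) dμ`. -/
def KLdiv {d : ℕ} (μ ν : Measure (Vec d)) : ℝ :=
  ∫ x, Real.log ((μ.rnDeriv ν x).toReal) ∂μ

/-- `G_{t,s} = ∫_t^s g(u)² du`. -/
def Gvar (g : ℝ → ℝ) (t s : ℝ) : ℝ := ∫ u in t..s, (g u) ^ 2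

/-- `α_{t,s} = exp(−G_{t,s}/2)`. -/
def alphaF (g : ℝ → ℝ) (t s : ℝ) : ℝ := Real.exp (-(Gvar g t s) / 2)

/-- `σ_t² = 1 − exp(−G_t)`. -/
def sigmaSq (g : ℝ → ℝ) (t : ℝ) : ℝ := 1 - Real.exp (-(Gvar g 0 t))

/-- The law of the forward marginal `x_t = α_t X₀ + σ_t Z`, `X₀ ∼ P`, `Z ∼ N(0,I_d)` indep. -/
def forwardLaw (d : ℕ) (P : Measure (Vec d)) (g : ℝ → ℝ) (t : ℝ) : Measure (Vec d) :=
  Measure.map (fun q : Vec d × Vec d => alphaF g 0 t • q.1 + Real.sqrt (sigmaSq g t) • q.2)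
    (P.prod (stdGauss d))

/-- Explicit density of the forward marginal `p_t` (for `t > 0`). -/
def forwardDensity (d : ℕ) (P : Measure (Vec d)) (g : ℝ → ℝ) (t : ℝ) (x : Vec d) : ℝ :=
  (2 * π * sigmaSq g t) ^ (-(d : ℝ) / 2) *
    ∫ y, Real.exp (-‖x - alphaF g 0 t • y‖ ^ 2 / (2 * sigmaSq g t)) ∂P

/-- Score function `∇ log p` of a density `p`. -/
def scoreOf {d : ℕ} (p : Vec d → ℝ) (x : Vec d) : Vec d :=
  gradient (fun z => Real.log (p z)) x

/-- Score `∇ log p_t` of the forward marginal at time `t > 0`. -/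
def fwdScore (d : ℕ) (P : Measure (Vec d)) (g : ℝ → ℝ) (t : ℝ) : Vec d → Vec d :=
  scoreOf (forwardDensity d P g t)

/-- Underlying measure for the joint forward coupling: `ω = (X₀, Z, Z')`. -/
def coupleMeasure (d : ℕ) (P : Measure (Vec d)) : Measure (Vec d × Vec d × Vec d) :=
  P.prod ((stdGauss d).prod (stdGauss d))

/-- The forward process at time `t`: `x_t(ω) = α_t X₀ + σ_t Z`. -/
def xt (d : ℕ) (g : ℝ → ℝ) (t : ℝ) (ω : Vec d × Vec d × Vec d) : Vec d :=
  alphaF g 0 t • ω.1 + Real.sqrt (sigmaSq g t) • ω.2.1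

/-- The forward process at time `s ≥ t`, coupled with `x_t` by
`x_s = α_{t,s} x_t + √(1−α_{t,s}²) Z'`. -/
def xts (d : ℕ) (g : ℝ → ℝ) (t s : ℝ) (ω : Vec d × Vec d × Vec d) : Vec d :=
  alphaF g t s • xt d g t ω + Real.sqrt (1 - (alphaF g t s) ^ 2) • ω.2.2

/-- Law of a Markov chain after `n` steps, started at `init`, with transition kernels `κ`. -/
def chainLaw (d : ℕ) (init : Measure (Vec d)) (κ : ℕ → Vec d → Measure (Vec d)) :
    ℕ → Measure (Vec d)
  | 0 => init
  | k + 1 => (chainLaw d init κ k).bind (κ k)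

/-- One step of the exponential-integrator sampler:
`ŷ_{k+1} | ŷ_k = a ∼ N(e^{G_{N−k}/2}·a + 2(e^{G_{N−k}/2} − 1)·s(a,t_{N−k}), (e^{G_{N−k}} − 1)·I_d)`. -/
def EIstep (d N : ℕ) (tp : ℕ → ℝ) (g : ℝ → ℝ) (sc : Vec d → ℝ → Vec d) (k : ℕ) (a : Vec d) :
    Measure (Vec d) :=
  gaussMeasure d
    (Real.exp (Gvar g (tp (N - k - 1)) (tp (N - k)) / 2) • a +
      (2 * (Real.exp (Gvar g (tp (N - k - 1)) (tp (N - k)) / 2) - 1)) • sc a (tp (N - k)))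
    (Real.exp (Gvar g (tp (N - k - 1)) (tp (N - k))) - 1)

/-- One step of the Euler–Maruyama sampler:
`ŷ_{k+1} | ŷ_k = a ∼ N((1 + G_{N−k}/2)·a + G_{N−k}·s(a,t_{N−k}), G_{N−k}·I_d)`. -/
def EMstep (d N : ℕ) (tp : ℕ → ℝ) (g : ℝ → ℝ) (sc : Vec d → ℝ → Vec d) (k : ℕ) (a : Vec d) :
    Measure (Vec d) :=
  gaussMeasure d
    ((1 + Gvar g (tp (N - k - 1)) (tp (N - k)) / 2) • a +
      (Gvar g (tp (N - k - 1)) (tp (N - k))) • sc a (tp (N - k)))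
    (Gvar g (tp (N - k - 1)) (tp (N - k)))

/-- Terminal law of the exponential-integrator sampler started at `N(0,I_d)`. -/
def EIlaw (d N : ℕ) (tp : ℕ → ℝ) (g : ℝ → ℝ) (sc : Vec d → ℝ → Vec d) : Measure (Vec d) :=
  chainLaw d (stdGauss d) (EIstep d N tp g sc) N

/-- Terminal law of the Euler–Maruyama sampler started at `N(0,I_d)`. -/
def EMlaw (d N : ℕ) (tp : ℕ → ℝ) (g : ℝ → ℝ) (sc : Vec d → ℝ → Vec d) : Measure (Vec d) :=
  chainLaw d (stdGauss d) (EMstep d N tp g sc) N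

/-- The weighted L² score estimation error
`(1/G_T)·Σ_{k=1}^N G_k·E_{p_{t_k}} ‖∇log p_{t_k}(x) − s(x,t_k)‖²`. -/
def scoreErr (d N : ℕ) (P : Measure (Vec d)) (g : ℝ → ℝ) (tp : ℕ → ℝ)
    (sc : Vec d → ℝ → Vec d) : ℝ :=
  (1 / Gvar g 0 (tp N)) * ∑ k ∈ Finset.range N,
    Gvar g (tp k) (tp (k + 1)) *
      ∫ x, ‖fwdScore d P g (tp (k + 1)) x - sc x (tp (k + 1))‖ ^ 2
        ∂(forwardLaw d P g (tp (k + 1)))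

/-- Entry `(i,j)` of the Hessian matrix `∇²f(x)`. -/
def hessEntry {d : ℕ} (f : Vec d → ℝ) (x : Vec d) (i j : Fin d) : ℝ :=
  fderiv ℝ (fun y => fderiv ℝ f y (EuclideanSpace.single j 1)) x (EuclideanSpace.single i 1)

/-- Frobenius norm of the Hessian matrix `∇²f(x)`. -/
def hessFrob {d : ℕ} (f : Vec d → ℝ) (x : Vec d) : ℝ :=
  Real.sqrt (∑ i, ∑ j, (hessEntry f x i j) ^ 2)

/-- Density of the Gaussian perturbation `X + σZ`, `X ∼ P`, `Z ∼ N(0,I_d)`. -/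
def perturbDensity (d : ℕ) (P : Measure (Vec d)) (σ : ℝ) (x : Vec d) : ℝ :=
  (2 * π * σ ^ 2) ^ (-(d : ℝ) / 2) * ∫ y, Real.exp (-‖x - y‖ ^ 2 / (2 * σ ^ 2)) ∂P

/-- Density of `μY + σZ`, `Y ∼ P`, `Z ∼ N(0,I_d)`. -/
def perturbDensity' (d : ℕ) (P : Measure (Vec d)) (μ σ : ℝ) (x : Vec d) : ℝ :=
  (2 * π * σ ^ 2) ^ (-(d : ℝ) / 2) * ∫ y, Real.exp (-‖x - μ • y‖ ^ 2 / (2 * σ ^ 2)) ∂P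

/-- Law of the Gaussian perturbation `X + σZ`. -/
def perturbLaw (d : ℕ) (P : Measure (Vec d)) (σ : ℝ) : Measure (Vec d) :=
  Measure.map (fun q : Vec d × Vec d => q.1 + σ • q.2)
    (P.prod (MeasureTheory.volume.withDensity
      (fun x : Vec d => ENNReal.ofReal ((2 * π) ^ (-(d : ℝ) / 2) * Real.exp (-‖x‖ ^ 2 / 2)))))

/-- The tilted conditional measure `dP̃_{μ,σ}(y|x) ∝ exp(−‖x−μy‖²/(2σ²)) dP(y)`. -/
def tiltMeasure (d : ℕ) (P : Measure (Vec d)) (μ σ : ℝ) (x : Vec d) : Measure (Vec d) :=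
  ((P.withDensity (fun y => ENNReal.ofReal (Real.exp (-‖x - μ • y‖ ^ 2 / (2 * σ ^ 2))))) Set.univ)⁻¹ •
    P.withDensity (fun y => ENNReal.ofReal (Real.exp (-‖x - μ • y‖ ^ 2 / (2 * σ ^ 2))))

/-- Sub-exponential (ψ₁-Orlicz) norm of `f` under the measure `μ`. -/
def psi1Norm {α : Type*} [MeasurableSpace α] (μ : Measure α) (f : α → ℝ) : ℝ :=
  sInf {t : ℝ | 0 < t ∧ ∫ x, Real.exp (|f x| / t) ∂μ ≤ 2}

/-- Sub-Gaussian (ψ₂-Orlicz) norm of `f` under the measure `μ`. -/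
def psi2Norm {α : Type*} [MeasurableSpace α] (μ : Measure α) (f : α → ℝ) : ℝ :=
  sInf {t : ℝ | 0 < t ∧ ∫ x, Real.exp ((f x) ^ 2 / t ^ 2) ∂μ ≤ 2}

/-!
Conditionally on `Y + σZ = x`, the variable `Y ∼ P` follows the posterior, which is `P` tilted by
the Gaussian kernel. Write `u = (x - y) / σ ^ 2` for the score of the kernel in `y`. Differentiating
twice under the integral sign, `∇² log p_σ` is the posterior covariance of `u` minus `I / σ ^ 2`,
and `u` differs from `-y / σ ^ 2` by a constant.

If `P` has density `p` with score `s = ∇ log p`, the posterior has score `s + u`, and integration by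
parts is Stein's identity `E[∂_v f] = -E[f * (s_v + u_v)]`. For `f = 1`, `f = u_v` and `f = s_w` it
gives `E[s] = -E[u]`, `E[u_v * s_w] = ⟪v, w⟫ / σ ^ 2 - E[u_v * u_w]` and
`E[∇² log p] = -E[s_w * s_v] - E[s_w * u_v]`, which together turn the covariance of `u` into
`E[∇² log p] + Cov(s)`. As `p` may vanish, where `log p` is singular, the integration by parts is
carried out for truncations supported in `{p > 0}`.
-/

open ProbabilityTheory Set Filter
open scoped Topology RealInnerProductSpace

section SecondDerivative

variable {E : Type*} [NormedAddCommGroup E] [NormedSpace ℝ E]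

/-- The Hessian of `f` at `x` as a form in the directions `v`, `w`: the derivative along `v` of the
derivative of `f` along `w`. On coordinate vectors it is `hessEntry`, definitionally. -/
def hessForm (f : E → ℝ) (x v w : E) : ℝ :=
  fderiv ℝ (fun y => fderiv ℝ f y w) x v

lemma hessForm_log {f : E → ℝ} {x w : E} (hf : Differentiable ℝ f) (hpos : ∀ y, 0 < f y)
    (hf' : DifferentiableAt ℝ (fun y => fderiv ℝ f y w) x) (v : E) :
    hessForm (fun y => Real.log (f y)) x v w =
      hessForm f x v w / f x - fderiv ℝ f x v / f x * (fderiv ℝ f x w / f x) := by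
  have hlog : (fun y => fderiv ℝ (fun z => Real.log (f z)) y w) =
      fun y => (f y)⁻¹ * fderiv ℝ f y w := by
    ext y
    rw [fderiv.log (hf y) (hpos y).ne', smul_apply, smul_eq_mul]
  have hinv : HasFDerivAt (fun y => (f y)⁻¹) (-(f x ^ 2)⁻¹ • fderiv ℝ f x) x :=
    (hasDerivAt_inv (hpos x).ne').comp_hasFDerivAt x (hf x).hasFDerivAt
  rw [hessForm, hlog, (hinv.fun_mul hf'.hasFDerivAt).fderiv, hessForm]
  simp only [add_apply, smul_apply, smul_eq_mul]
  ring

lemma hessForm_log_const_mul {f : E → ℝ} {c : ℝ} (hc : c ≠ 0) (hf : ∀ y, f y ≠ 0) :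
    hessForm (fun y => Real.log (c * f y)) = hessForm fun y => Real.log (f y) := by
  ext x v w
  simp only [hessForm, Real.log_mul hc (hf _), fderiv_const_add]

lemma differentiableAt_fderiv_log_apply {p : E → ℝ} {y : E} (hp : ContDiffAt ℝ 2 p y)
    (hpy : p y ≠ 0) (w : E) :
    DifferentiableAt ℝ (fun z => fderiv ℝ (fun u => Real.log (p u)) z w) y :=
  (((hp.log hpy).fderiv_right (m := 1) le_rfl).differentiableAt one_ne_zero).clm_apply
    (differentiableAt_const w)

lemma hasFDerivAt_comp_const_sub {G : Type*} [NormedAddCommGroup G] [NormedSpace ℝ G] {f : E → G}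
    {f' : E →L[ℝ] G} {x y : E} (hf : HasFDerivAt f f' (x - y)) :
    HasFDerivAt (fun z => f (x - z)) (-f') y := by
  refine (hf.comp y ((hasFDerivAt_id y).const_sub x)).congr_fderiv ?_
  simp only [ContinuousLinearMap.comp_neg, ContinuousLinearMap.comp_id]

end SecondDerivative

section ParametricIntegral

variable {E G : Type*} [NormedAddCommGroup E] [NormedSpace ℝ E] [MeasurableSpace E] [BorelSpace E]
  [SecondCountableTopology E] [NormedAddCommGroup G] [NormedSpace ℝ G]
  {P : Measure E} [IsFiniteMeasure P]

lemma hasFDerivAt_integral_comp_sub {F : E → G} (hF : ContDiff ℝ 1 F) {C : ℝ}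
    (hC : ∀ u, ‖fderiv ℝ F u‖ ≤ C) {x : E} (hint : Integrable (fun y => F (x - y)) P) :
    HasFDerivAt (fun z => ∫ y, F (z - y) ∂P) (∫ y, fderiv ℝ F (x - y) ∂P) x := by
  have hcont : Continuous F := hF.continuous
  have hcont' : Continuous (fderiv ℝ F) := hF.continuous_fderiv one_ne_zero
  refine hasFDerivAt_integral_of_dominated_of_fderiv_le (F' := fun z y => fderiv ℝ F (z - y))
    (bound := fun _ => C) univ_mem
    (.of_forall fun z => (hcont.comp (continuous_sub_left z)).aestronglyMeasurable) hint
    (hcont'.comp (continuous_sub_left x)).aestronglyMeasurable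
    (.of_forall fun y z _ => hC _) (integrable_const C) (.of_forall fun y z _ => ?_)
  exact (hasFDerivAt_comp_sub y).2 (hF.differentiable one_ne_zero _).hasFDerivAt

lemma fderiv_integral_comp_sub_apply {F : E → G} (hF : ContDiff ℝ 1 F) {C : ℝ}
    (hC : ∀ u, ‖fderiv ℝ F u‖ ≤ C) {x : E} (hint : Integrable (fun y => F (x - y)) P) (v : E) :
    fderiv ℝ (fun z => ∫ y, F (z - y) ∂P) x v = ∫ y, fderiv ℝ F (x - y) v ∂P := by
  have hcont' : Continuous (fderiv ℝ F) := hF.continuous_fderiv one_ne_zero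
  have hint' : Integrable (fun y => fderiv ℝ F (x - y)) P :=
    .of_bound (hcont'.comp (continuous_sub_left x)).aestronglyMeasurable C
      (.of_forall fun y => hC _)
  rw [(hasFDerivAt_integral_comp_sub hF hC hint).fderiv, ContinuousLinearMap.integral_apply hint']

end ParametricIntegral

section GaussianKernel

variable {E : Type*} [NormedAddCommGroup E]

/-- The unnormalised centred isotropic Gaussian kernel of variance `σ ^ 2`. -/
def gaussKernel (σ : ℝ) (u : E) : ℝ :=
  Real.exp (-‖u‖ ^ 2 / (2 * σ ^ 2))

lemma gaussKernel_pos (σ : ℝ) (u : E) : 0 < gaussKernel σ u :=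
  Real.exp_pos _

lemma gaussKernel_le_one (σ : ℝ) (u : E) : gaussKernel σ u ≤ 1 :=
  Real.exp_le_one_iff.2 (div_nonpos_of_nonpos_of_nonneg (by simp) (by positivity))

lemma norm_sq_mul_gaussKernel_le {σ : ℝ} (hσ : σ ≠ 0) (u : E) :
    ‖u‖ ^ 2 * gaussKernel σ u ≤ 2 * σ ^ 2 := by
  set t := ‖u‖ ^ 2 / (2 * σ ^ 2) with ht
  have hexp : t * Real.exp (-t) ≤ 1 :=
    (Real.mul_exp_neg_le_exp_neg_one t).trans (Real.exp_le_one_iff.2 (by norm_num))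
  calc ‖u‖ ^ 2 * gaussKernel σ u = 2 * σ ^ 2 * (t * Real.exp (-t)) := by
        rw [gaussKernel, neg_div, ← ht, ← mul_assoc, ht, mul_div_cancel₀ _ (by positivity)]
    _ ≤ 2 * σ ^ 2 := mul_le_of_le_one_right (by positivity) hexp

lemma norm_mul_gaussKernel_le {σ : ℝ} (hσ : σ ≠ 0) (u : E) :
    ‖u‖ * gaussKernel σ u ≤ 1 + 2 * σ ^ 2 := by
  have hu : ‖u‖ ≤ 1 + ‖u‖ ^ 2 := by nlinarith [sq_nonneg (‖u‖ - 1), sq_nonneg ‖u‖]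
  calc ‖u‖ * gaussKernel σ u ≤ (1 + ‖u‖ ^ 2) * gaussKernel σ u := by
        gcongr; exact (gaussKernel_pos σ u).le
    _ = gaussKernel σ u + ‖u‖ ^ 2 * gaussKernel σ u := by ring
    _ ≤ 1 + 2 * σ ^ 2 :=
        add_le_add (gaussKernel_le_one σ u) (norm_sq_mul_gaussKernel_le hσ u)

variable [InnerProductSpace ℝ E]

lemma contDiff_gaussKernel (σ : ℝ) {n : WithTop ℕ∞} : ContDiff ℝ n (gaussKernel σ : E → ℝ) :=
  ((contDiff_norm_sq ℝ).neg.div_const _).exp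

lemma hasFDerivAt_inner_div (c : ℝ) (u w : E) :
    HasFDerivAt (fun u => ⟪u, w⟫ / c) (c⁻¹ • innerSL ℝ w) u := by
  have hlin : (fun u => ⟪u, w⟫ / c) = fun u => c⁻¹ * innerSL ℝ w u := by
    ext u
    rw [innerSL_apply_apply, real_inner_comm, div_eq_inv_mul]
  rw [hlin]
  exact (innerSL ℝ w).hasFDerivAt.const_mul _

lemma hasFDerivAt_gaussKernel (σ : ℝ) (u : E) :
    HasFDerivAt (gaussKernel σ) (-(gaussKernel σ u / σ ^ 2) • innerSL ℝ u) u := by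
  have hsq : HasFDerivAt (fun u : E => ‖u‖ ^ 2) (2 • innerSL ℝ u) u := (hasFDerivAt_id u).norm_sq
  refine ((hsq.neg.mul_const (2 * σ ^ 2)⁻¹).exp).congr_fderiv ?_
  ext v
  simp only [smul_apply, neg_apply, smul_eq_mul, nsmul_eq_mul, gaussKernel, div_eq_mul_inv,
    Pi.neg_apply, innerSL_apply_apply]
  ring

lemma fderiv_gaussKernel_apply (σ : ℝ) (u w : E) :
    fderiv ℝ (gaussKernel σ) u w = gaussKernel σ u * -(⟪u, w⟫ / σ ^ 2) := by
  rw [(hasFDerivAt_gaussKernel σ u).fderiv, smul_apply, innerSL_apply_apply, smul_eq_mul]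
  ring

lemma contDiff_fderiv_gaussKernel_apply (σ : ℝ) (w : E) :
    ContDiff ℝ 1 fun u => fderiv ℝ (gaussKernel σ) u w :=
  ((contDiff_gaussKernel σ).fderiv_right (m := 1) (n := 2) le_rfl).clm_apply contDiff_const

lemma hasFDerivAt_fderiv_gaussKernel_apply (σ : ℝ) (u w : E) :
    HasFDerivAt (fun u => fderiv ℝ (gaussKernel σ) u w)
      ((gaussKernel σ u / σ ^ 2) • ((⟪u, w⟫ / σ ^ 2) • innerSL ℝ u - innerSL ℝ w)) u := by
  simp_rw [fderiv_gaussKernel_apply]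
  refine ((hasFDerivAt_gaussKernel σ u).fun_mul
    (hasFDerivAt_inner_div (σ ^ 2) u w).neg).congr_fderiv ?_
  ext v
  simp only [smul_neg, Pi.neg_apply, neg_smul, neg_neg, add_apply, neg_apply, smul_apply,
    coe_innerSL_apply, smul_eq_mul, sub_apply]
  ring

lemma hessForm_gaussKernel (σ : ℝ) (u v w : E) :
    hessForm (gaussKernel σ) u v w =
      gaussKernel σ u * (⟪u, v⟫ / σ ^ 2 * (⟪u, w⟫ / σ ^ 2) - ⟪v, w⟫ / σ ^ 2) := by
  rw [hessForm, (hasFDerivAt_fderiv_gaussKernel_apply σ u w).fderiv]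
  simp only [smul_apply, sub_apply, innerSL_apply_apply, smul_eq_mul, real_inner_comm v w]
  ring

lemma norm_fderiv_gaussKernel_le {σ : ℝ} (hσ : σ ≠ 0) (u : E) :
    ‖fderiv ℝ (gaussKernel σ) u‖ ≤ (1 + 2 * σ ^ 2) / σ ^ 2 := by
  rw [(hasFDerivAt_gaussKernel σ u).fderiv, norm_smul, norm_neg, innerSL_apply_norm,
    Real.norm_of_nonneg (div_nonneg (gaussKernel_pos σ u).le (sq_nonneg σ)), div_mul_eq_mul_div,
    mul_comm]
  gcongr
  exact norm_mul_gaussKernel_le hσ u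

lemma norm_fderiv_fderiv_gaussKernel_apply_le {σ : ℝ} (hσ : σ ≠ 0) (u w : E) :
    ‖fderiv ℝ (fun u => fderiv ℝ (gaussKernel σ) u w) u‖ ≤ 3 * ‖w‖ / σ ^ 2 := by
  have hK := (gaussKernel_pos σ u).le
  have hσ2 : 0 < σ ^ 2 := by positivity
  have hsub : ‖(⟪u, w⟫ / σ ^ 2) • innerSL ℝ u - innerSL ℝ w‖ ≤
      ‖u‖ * ‖w‖ / σ ^ 2 * ‖u‖ + ‖w‖ := by
    refine (norm_sub_le _ _).trans (add_le_add ?_ (innerSL_apply_norm ℝ w).le)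
    rw [norm_smul, norm_div, innerSL_apply_norm, Real.norm_of_nonneg hσ2.le]
    gcongr
    exact norm_inner_le_norm u w
  rw [(hasFDerivAt_fderiv_gaussKernel_apply σ u w).fderiv, norm_smul,
    Real.norm_of_nonneg (div_nonneg hK hσ2.le)]
  calc gaussKernel σ u / σ ^ 2 * ‖(⟪u, w⟫ / σ ^ 2) • innerSL ℝ u - innerSL ℝ w‖
      ≤ gaussKernel σ u / σ ^ 2 * (‖u‖ * ‖w‖ / σ ^ 2 * ‖u‖ + ‖w‖) := by gcongr
    _ = ‖w‖ / σ ^ 2 * (‖u‖ ^ 2 * gaussKernel σ u / σ ^ 2 + gaussKernel σ u) := by ring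
    _ ≤ ‖w‖ / σ ^ 2 * (2 + 1) := by
        gcongr
        · exact (div_le_iff₀ hσ2).2 (norm_sq_mul_gaussKernel_le hσ u)
        · exact gaussKernel_le_one σ u
    _ = 3 * ‖w‖ / σ ^ 2 := by ring

end GaussianKernel

section Posterior

variable {E : Type*} [NormedAddCommGroup E] [MeasurableSpace E]

/-- The convolution `x ↦ ∫ exp (-‖x - y‖ ^ 2 / (2 * σ ^ 2)) dP(y)` of `P` with the unnormalised
Gaussian kernel: the Gaussian perturbation density up to a constant factor. -/
def gaussSmoothing (P : Measure E) (σ : ℝ) (x : E) : ℝ :=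
  ∫ y, gaussKernel σ (x - y) ∂P

/-- The law of `Y ∼ P` given that its Gaussian perturbation `Y + N(0, σ ^ 2)` equals `x`: the
exponential tilt of `P` by the log-likelihood of `x`. -/
def gaussPosterior (P : Measure E) (σ : ℝ) (x : E) : Measure E :=
  P.tilted fun y => -‖x - y‖ ^ 2 / (2 * σ ^ 2)

variable {P : Measure E} {σ : ℝ}

lemma integral_gaussPosterior (f : E → ℝ) (x : E) :
    ∫ y, f y ∂gaussPosterior P σ x =
      (∫ y, gaussKernel σ (x - y) * f y ∂P) / gaussSmoothing P σ x := by
  rw [gaussPosterior, integral_tilted, ← integral_div]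
  refine integral_congr_ae (.of_forall fun y => ?_)
  exact div_mul_eq_mul_div _ _ _

variable [BorelSpace E]

lemma integrable_gaussKernel_sub (P : Measure E) [IsFiniteMeasure P] (σ : ℝ) (x : E) :
    Integrable (fun y => gaussKernel σ (x - y)) P := by
  refine .of_bound (Measurable.aestronglyMeasurable ?_) 1 (.of_forall fun y => ?_)
  · unfold gaussKernel
    fun_prop
  · rw [Real.norm_of_nonneg (gaussKernel_pos σ _).le]
    exact gaussKernel_le_one σ _

variable [IsFiniteMeasure P]

instance [NeZero P] (x : E) : IsProbabilityMeasure (gaussPosterior P σ x) :=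
  isProbabilityMeasure_tilted (integrable_gaussKernel_sub P σ x)

lemma gaussSmoothing_pos [NeZero P] (x : E) : 0 < gaussSmoothing P σ x :=
  integral_exp_pos (integrable_gaussKernel_sub P σ x)

lemma integrable_gaussPosterior_iff {f : E → ℝ} {x : E} :
    Integrable f (gaussPosterior P σ x) ↔ Integrable (fun y => gaussKernel σ (x - y) * f y) P :=
  integrable_tilted_iff (integrable_gaussKernel_sub P σ x) f

lemma integrable_fderiv_gaussKernel_sub_apply [InnerProductSpace ℝ E] (hσ : σ ≠ 0)
    (x w : E) : Integrable (fun y => fderiv ℝ (gaussKernel σ) (x - y) w) P := by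
  have hcont := (contDiff_fderiv_gaussKernel_apply σ w).continuous
  refine .of_bound (hcont.comp (continuous_sub_left x)).aestronglyMeasurable
    ((1 + 2 * σ ^ 2) / σ ^ 2 * ‖w‖) (.of_forall fun y => ?_)
  exact ContinuousLinearMap.le_of_opNorm_le _ (norm_fderiv_gaussKernel_le hσ _) w

variable [SecondCountableTopology E]

lemma memLp_two_sub_gaussPosterior (hσ : σ ≠ 0) (x : E) :
    MemLp (fun y => x - y) 2 (gaussPosterior P σ x) := by
  have hmeas : Measurable fun y : E => x - y := by fun_prop
  rw [memLp_two_iff_integrable_sq_norm hmeas.aestronglyMeasurable, integrable_gaussPosterior_iff]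
  refine .of_bound (Measurable.aestronglyMeasurable ?_) (2 * σ ^ 2) (.of_forall fun y => ?_)
  · unfold gaussKernel
    fun_prop
  · rw [Real.norm_of_nonneg (mul_nonneg (gaussKernel_pos σ _).le (sq_nonneg _)), mul_comm]
    exact norm_sq_mul_gaussKernel_le hσ _

variable [InnerProductSpace ℝ E]

lemma fderiv_gaussSmoothing_apply (hσ : σ ≠ 0) (x w : E) :
    fderiv ℝ (gaussSmoothing P σ) x w = ∫ y, fderiv ℝ (gaussKernel σ) (x - y) w ∂P :=
  fderiv_integral_comp_sub_apply (contDiff_gaussKernel σ) (norm_fderiv_gaussKernel_le hσ)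
    (integrable_gaussKernel_sub P σ x) w

lemma differentiable_gaussSmoothing (hσ : σ ≠ 0) : Differentiable ℝ (gaussSmoothing P σ) :=
  fun x => (hasFDerivAt_integral_comp_sub (contDiff_gaussKernel σ)
    (norm_fderiv_gaussKernel_le hσ) (integrable_gaussKernel_sub P σ x)).differentiableAt

lemma differentiable_fderiv_gaussSmoothing_apply (hσ : σ ≠ 0) (w : E) :
    Differentiable ℝ fun x => fderiv ℝ (gaussSmoothing P σ) x w := by
  intro x
  simp_rw [fderiv_gaussSmoothing_apply hσ]
  exact (hasFDerivAt_integral_comp_sub (contDiff_fderiv_gaussKernel_apply σ w)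
    (norm_fderiv_fderiv_gaussKernel_apply_le hσ · w)
    (integrable_fderiv_gaussKernel_sub_apply hσ x w)).differentiableAt

lemma hessForm_gaussSmoothing (hσ : σ ≠ 0) (x v w : E) :
    hessForm (gaussSmoothing P σ) x v w = ∫ y, hessForm (gaussKernel σ) (x - y) v w ∂P := by
  simp_rw [hessForm, fderiv_gaussSmoothing_apply hσ]
  exact fderiv_integral_comp_sub_apply (contDiff_fderiv_gaussKernel_apply σ w)
    (norm_fderiv_fderiv_gaussKernel_apply_le hσ · w)
    (integrable_fderiv_gaussKernel_sub_apply hσ x w) v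

lemma memLp_two_inner_sub_gaussPosterior (hσ : σ ≠ 0) (x v : E) :
    MemLp (fun y => ⟪x - y, v⟫ / σ ^ 2) 2 (gaussPosterior P σ x) := by
  simp_rw [div_eq_mul_inv]
  exact ((memLp_two_sub_gaussPosterior hσ x).inner_const v).mul_const _

lemma fderiv_gaussSmoothing_div (hσ : σ ≠ 0) (x w : E) :
    fderiv ℝ (gaussSmoothing P σ) x w / gaussSmoothing P σ x =
      -∫ y, ⟪x - y, w⟫ / σ ^ 2 ∂gaussPosterior P σ x := by
  simp_rw [fderiv_gaussSmoothing_apply hσ, fderiv_gaussKernel_apply, ← integral_neg,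
    integral_gaussPosterior]

lemma hessForm_gaussSmoothing_div [NeZero P] (hσ : σ ≠ 0) (x v w : E) :
    hessForm (gaussSmoothing P σ) x v w / gaussSmoothing P σ x =
      ∫ y, ⟪x - y, v⟫ / σ ^ 2 * (⟪x - y, w⟫ / σ ^ 2) ∂gaussPosterior P σ x - ⟪v, w⟫ / σ ^ 2 := by
  have hint : Integrable (fun y => ⟪x - y, v⟫ / σ ^ 2 * (⟪x - y, w⟫ / σ ^ 2))
      (gaussPosterior P σ x) :=
    (memLp_two_inner_sub_gaussPosterior hσ x v).integrable_mul
      (memLp_two_inner_sub_gaussPosterior hσ x w)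
  calc hessForm (gaussSmoothing P σ) x v w / gaussSmoothing P σ x
      = ∫ y, ⟪x - y, v⟫ / σ ^ 2 * (⟪x - y, w⟫ / σ ^ 2) - ⟪v, w⟫ / σ ^ 2 ∂gaussPosterior P σ x := by
        simp_rw [hessForm_gaussSmoothing hσ, hessForm_gaussKernel, integral_gaussPosterior]
    _ = _ := by
        rw [integral_sub hint (integrable_const _), integral_const, probReal_univ, one_smul]

lemma hessForm_log_gaussSmoothing [NeZero P] (hσ : σ ≠ 0) (x v w : E) :
    hessForm (fun z => Real.log (gaussSmoothing P σ z)) x v w =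
      cov[fun y => ⟪x - y, v⟫ / σ ^ 2, fun y => ⟪x - y, w⟫ / σ ^ 2; gaussPosterior P σ x] -
        ⟪v, w⟫ / σ ^ 2 := by
  rw [hessForm_log (differentiable_gaussSmoothing hσ) (fun _ => gaussSmoothing_pos _)
      (differentiable_fderiv_gaussSmoothing_apply hσ w x), hessForm_gaussSmoothing_div hσ,
    fderiv_gaussSmoothing_div hσ, fderiv_gaussSmoothing_div hσ,
    covariance_eq_sub (memLp_two_inner_sub_gaussPosterior hσ x v)
      (memLp_two_inner_sub_gaussPosterior hσ x w)]
  simp only [Pi.mul_apply]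
  ring

lemma memLp_two_inner_gaussPosterior [NeZero P] (hσ : σ ≠ 0) (x v : E) :
    MemLp (fun y => ⟪y, v⟫ / σ ^ 2) 2 (gaussPosterior P σ x) := by
  refine ((memLp_const (⟪x, v⟫ / σ ^ 2)).sub
    (memLp_two_inner_sub_gaussPosterior hσ x v)).ae_eq (.of_forall fun y => ?_)
  simp only [Pi.sub_apply, inner_sub_left, sub_div, sub_sub_cancel]

lemma covariance_inner_sub_gaussPosterior [NeZero P] (hσ : σ ≠ 0) (x v w : E) :
    cov[fun y => ⟪x - y, v⟫ / σ ^ 2, fun y => ⟪x - y, w⟫ / σ ^ 2; gaussPosterior P σ x] =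
      cov[fun y => ⟪y, v⟫ / σ ^ 2, fun y => ⟪y, w⟫ / σ ^ 2; gaussPosterior P σ x] := by
  have hint (v : E) : Integrable (fun y => ⟪y, v⟫ / σ ^ 2) (gaussPosterior P σ x) :=
    (memLp_two_inner_gaussPosterior hσ x v).integrable one_le_two
  simp_rw [inner_sub_left, sub_div]
  rw [covariance_const_sub_left (hint v), covariance_const_sub_right (hint w), neg_neg]

end Posterior

section Truncation

/-- A smooth truncation of the identity near `0`: it vanishes for `s ≤ 1` and equals `s` for
`2 ≤ s`. -/
def truncId (s : ℝ) : ℝ :=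
  s * Real.smoothTransition (s - 1)

lemma truncId_eq_zero {s : ℝ} (hs : s ≤ 1) : truncId s = 0 := by
  rw [truncId, Real.smoothTransition.zero_of_nonpos (sub_nonpos.2 hs), mul_zero]

lemma truncId_eq_self {s : ℝ} (hs : 2 ≤ s) : truncId s = s := by
  rw [truncId, Real.smoothTransition.one_of_one_le (by linarith), mul_one]

lemma contDiff_truncId : ContDiff ℝ 1 truncId :=
  contDiff_id.mul (Real.smoothTransition.contDiff.comp (contDiff_id.sub contDiff_const))

lemma deriv_truncId_eq_zero {s : ℝ} (hs : s < 1) : deriv truncId s = 0 := by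
  have hev : truncId =ᶠ[𝓝 s] fun _ => 0 :=
    (eventually_lt_nhds hs).mono fun t ht => truncId_eq_zero ht.le
  rw [hev.deriv_eq, deriv_const]

lemma deriv_truncId_eq_one {s : ℝ} (hs : 2 < s) : deriv truncId s = 1 := by
  have hev : truncId =ᶠ[𝓝 s] id :=
    (eventually_gt_nhds hs).mono fun t ht => truncId_eq_self ht.le
  rw [hev.deriv_eq, deriv_id]

lemma exists_abs_deriv_truncId_le : ∃ C, ∀ s, |deriv truncId s| ≤ C := by
  obtain ⟨C, hC⟩ := (isCompact_Icc (a := (1 : ℝ)) (b := 2)).exists_bound_of_continuousOn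
    (contDiff_truncId.continuous_deriv le_rfl).continuousOn
  refine ⟨max C 1, fun s => ?_⟩
  rcases lt_or_ge s 1 with hs1 | hs1
  · simp [deriv_truncId_eq_zero hs1]
  rcases lt_or_ge 2 s with hs2 | hs2
  · simp [deriv_truncId_eq_one hs2]
  · exact le_max_of_le_left (hC s ⟨hs1, hs2⟩)

lemma continuous_smoothTransition_sub_one :
    Continuous fun s : ℝ => Real.smoothTransition (s - 1) :=
  Real.smoothTransition.continuous.comp (continuous_id.sub continuous_const)

lemma abs_smoothTransition_sub_one_le (s : ℝ) : |Real.smoothTransition (s - 1)| ≤ 1 :=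
  abs_le.2 ⟨by linarith [Real.smoothTransition.nonneg (s - 1)], Real.smoothTransition.le_one _⟩

end Truncation

section IntegrationByParts

/-- The truncation of a function `q` at level `R⁻¹`: it vanishes where `q ≤ R⁻¹` and equals `q`
where `2 * R⁻¹ ≤ q`. It replaces a density in integrations by parts, since it is differentiable
even at points where `q` vanishes and is merely continuous. -/
def posTrunc {α : Type*} (q : α → ℝ) (R : ℝ) (y : α) : ℝ :=
  R⁻¹ * truncId (R * q y)

lemma posTrunc_eq_smoothTransition_mul {α : Type*} (q : α → ℝ) {R : ℝ} (hR : R ≠ 0) (y : α) :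
    posTrunc q R y = Real.smoothTransition (R * q y - 1) * q y := by
  rw [posTrunc, truncId, mul_assoc, inv_mul_cancel_left₀ hR, mul_comm]

lemma integrableOn_comp_const_mul_mul {α : Type*} [MeasurableSpace α] {μ : Measure α}
    {q F : α → ℝ} (hq : Measurable q) {c : ℝ → ℝ} (hc : Measurable c) {C : ℝ}
    (hC : ∀ s, |c s| ≤ C) {S : Set α} (hF : IntegrableOn F S μ) (R : ℝ) :
    IntegrableOn (fun y => c (R * q y) * F y) S μ :=
  hF.bdd_mul (hc.comp (hq.const_mul R)).aestronglyMeasurable (.of_forall fun _ => hC _)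

lemma tendsto_setIntegral_comp_const_mul_mul {α : Type*} [MeasurableSpace α] {μ : Measure α}
    {q F : α → ℝ} (hq : Measurable q) {c : ℝ → ℝ} (hc : Measurable c) {C : ℝ}
    (hC : ∀ s, |c s| ≤ C) (hone : ∀ᶠ s in atTop, c s = 1) (hF : IntegrableOn F {y | 0 < q y} μ) :
    Tendsto (fun R : ℝ => ∫ y in {y | 0 < q y}, c (R * q y) * F y ∂μ) atTop
      (𝓝 (∫ y in {y | 0 < q y}, F y ∂μ)) := by
  refine tendsto_integral_filter_of_dominated_convergence (fun y => C * ‖F y‖)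
    (.of_forall fun R => (integrableOn_comp_const_mul_mul hq hc hC hF R).aestronglyMeasurable)
    (.of_forall fun R => .of_forall fun y => ?_) (hF.norm.const_mul C)
    ((ae_restrict_iff' (measurableSet_lt measurable_const hq)).2 (.of_forall fun y hy => ?_))
  · rw [norm_mul]
    gcongr
    exact hC _
  · refine tendsto_const_nhds.congr' ?_
    filter_upwards [(tendsto_id.atTop_mul_const hy).eventually hone] with R hR
    exact (one_mul (F y)).symm.trans (by rw [← hR, id])

lemma posTrunc_eventuallyEq_zero {α : Type*} [TopologicalSpace α] {q : α → ℝ} {y : α}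
    (hq : ContinuousAt q y) (hy : q y ≤ 0) {R : ℝ} (hR : 0 ≤ R) :
    posTrunc q R =ᶠ[𝓝 y] fun _ => 0 := by
  have hy1 : R * q y < 1 := (mul_nonpos_of_nonneg_of_nonpos hR hy).trans_lt one_pos
  filter_upwards [(hq.const_mul R).eventually_lt_const hy1] with z hz
  rw [posTrunc, truncId_eq_zero hz.le, mul_zero]

lemma mul_posTrunc_eq_indicator {α : Type*} [TopologicalSpace α] {q : α → ℝ} (hq : Continuous q)
    {R : ℝ} (hR : 0 < R) (a : α → ℝ) :
    (fun y => a y * posTrunc q R y) = {y | 0 < q y}.indicator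
      fun y => Real.smoothTransition (R * q y - 1) * (a y * q y) := by
  ext y
  rcases lt_or_ge 0 (q y) with hy | hy
  · rw [indicator_of_mem (by exact hy), posTrunc_eq_smoothTransition_mul q hR.ne']
    ring
  · rw [indicator_of_notMem (by exact hy.not_gt),
      (posTrunc_eventuallyEq_zero hq.continuousAt hy hR.le).eq_of_nhds, mul_zero]

variable {E : Type*} [NormedAddCommGroup E] [NormedSpace ℝ E] {f q : E → ℝ} {R : ℝ}

lemma hasFDerivAt_posTrunc {y : E} (hq : DifferentiableAt ℝ q y) (hR : R ≠ 0) :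
    HasFDerivAt (posTrunc q R) (deriv truncId (R * q y) • fderiv ℝ q y) y := by
  have hderiv : HasDerivAt truncId (deriv truncId (R * q y)) (R * q y) :=
    (contDiff_truncId.differentiable one_ne_zero _).hasDerivAt
  refine ((hderiv.comp_hasFDerivAt y (hq.hasFDerivAt.const_mul R)).const_mul R⁻¹).congr_fderiv ?_
  rw [smul_smul, smul_smul, mul_right_comm, inv_mul_cancel₀ hR, one_mul]

lemma differentiable_posTrunc (hq : Continuous q)
    (hqd : ∀ y, 0 < q y → DifferentiableAt ℝ q y) (hR : 0 < R) :
    Differentiable ℝ (posTrunc q R) := by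
  intro y
  rcases lt_or_ge 0 (q y) with hy | hy
  · exact (hasFDerivAt_posTrunc (hqd y hy) hR.ne').differentiableAt
  · exact (differentiableAt_const 0).congr_of_eventuallyEq
      (posTrunc_eventuallyEq_zero hq.continuousAt hy hR.le)

lemma mul_fderiv_posTrunc_eq_indicator (hq : Continuous q)
    (hqd : ∀ y, 0 < q y → DifferentiableAt ℝ q y) (hR : 0 < R) (a : E → ℝ) (v : E) :
    (fun y => a y * fderiv ℝ (posTrunc q R) y v) = {y | 0 < q y}.indicator
      fun y => deriv truncId (R * q y) * (a y * fderiv ℝ q y v) := by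
  ext y
  rcases lt_or_ge 0 (q y) with hy | hy
  · rw [indicator_of_mem (by exact hy), (hasFDerivAt_posTrunc (hqd y hy) hR.ne').fderiv,
      smul_apply, smul_eq_mul]
    ring
  · rw [indicator_of_notMem (by exact hy.not_gt),
      (posTrunc_eventuallyEq_zero hq.continuousAt hy hR.le).fderiv_eq, fderiv_fun_const]
    simp

variable [FiniteDimensional ℝ E] [MeasurableSpace E] [BorelSpace E] {μ : Measure E}
  [μ.IsAddHaarMeasure] {v : E}

lemma setIntegral_deriv_truncId_mul_fderiv_eq_neg (hq : Continuous q)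
    (hqd : ∀ y, 0 < q y → DifferentiableAt ℝ q y) (hfd : ∀ y, 0 < q y → DifferentiableAt ℝ f y)
    (hfq : IntegrableOn (fun y => f y * q y) {y | 0 < q y} μ)
    (hf'q : IntegrableOn (fun y => fderiv ℝ f y v * q y) {y | 0 < q y} μ)
    (hfq' : IntegrableOn (fun y => f y * fderiv ℝ q y v) {y | 0 < q y} μ) (hR : 0 < R) :
    ∫ y in {y | 0 < q y}, deriv truncId (R * q y) * (f y * fderiv ℝ q y v) ∂μ =
      -∫ y in {y | 0 < q y},
        Real.smoothTransition (R * q y - 1) * (fderiv ℝ f y v * q y) ∂μ := by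
  have hS : MeasurableSet {y | 0 < q y} := (isOpen_lt continuous_const hq).measurableSet
  obtain ⟨C, hC⟩ := exists_abs_deriv_truncId_le
  have hsupp {y : E} (hy : y ∈ tsupport (posTrunc q R)) : 0 < q y := by
    by_contra hneg
    exact notMem_tsupport_iff_eventuallyEq.2
      (posTrunc_eventuallyEq_zero hq.continuousAt (not_lt.1 hneg) hR.le) hy
  rw [← integral_indicator hS, ← integral_indicator hS,
    ← mul_fderiv_posTrunc_eq_indicator hq hqd hR, ← mul_posTrunc_eq_indicator hq hR]
  refine integral_mul_fderiv_eq_neg_fderiv_mul_of_integrable ?_ ?_ ?_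
    (fun y hy => hfd y (hsupp hy)) fun y _ => differentiable_posTrunc hq hqd hR y
  · rw [mul_posTrunc_eq_indicator hq hR, integrable_indicator_iff hS]
    exact integrableOn_comp_const_mul_mul hq.measurable
      continuous_smoothTransition_sub_one.measurable abs_smoothTransition_sub_one_le hf'q R
  · rw [mul_fderiv_posTrunc_eq_indicator hq hqd hR, integrable_indicator_iff hS]
    exact integrableOn_comp_const_mul_mul hq.measurable (measurable_deriv _) hC hfq' R
  · rw [mul_posTrunc_eq_indicator hq hR, integrable_indicator_iff hS]
    exact integrableOn_comp_const_mul_mul hq.measurable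
      continuous_smoothTransition_sub_one.measurable abs_smoothTransition_sub_one_le hfq R

theorem setIntegral_mul_fderiv_eq_neg_of_pos (hq : Continuous q)
    (hqd : ∀ y, 0 < q y → DifferentiableAt ℝ q y) (hfd : ∀ y, 0 < q y → DifferentiableAt ℝ f y)
    (hfq : IntegrableOn (fun y => f y * q y) {y | 0 < q y} μ)
    (hf'q : IntegrableOn (fun y => fderiv ℝ f y v * q y) {y | 0 < q y} μ)
    (hfq' : IntegrableOn (fun y => f y * fderiv ℝ q y v) {y | 0 < q y} μ) :
    ∫ y in {y | 0 < q y}, f y * fderiv ℝ q y v ∂μ =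
      -∫ y in {y | 0 < q y}, fderiv ℝ f y v * q y ∂μ := by
  obtain ⟨C, hC⟩ := exists_abs_deriv_truncId_le
  have hleft := tendsto_setIntegral_comp_const_mul_mul hq.measurable (measurable_deriv _) hC
    ((eventually_gt_atTop 2).mono fun s hs => deriv_truncId_eq_one hs) hfq'
  have hright := tendsto_setIntegral_comp_const_mul_mul hq.measurable
    continuous_smoothTransition_sub_one.measurable abs_smoothTransition_sub_one_le
    ((eventually_ge_atTop 2).mono fun s hs =>
      Real.smoothTransition.one_of_one_le (by linarith)) hf'q
  refine tendsto_nhds_unique hleft (hright.neg.congr' ?_)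
  filter_upwards [eventually_gt_atTop 0] with R hR
  exact (setIntegral_deriv_truncId_mul_fderiv_eq_neg hq hqd hfd hfq hf'q hfq' hR).symm

end IntegrationByParts

section SteinIdentity

section WithDensity

variable {α : Type*} [MeasurableSpace α] {μ : Measure α} {q : α → ℝ}

lemma ae_pos_withDensity_ofReal (hq : Measurable q) :
    ∀ᵐ y ∂μ.withDensity fun y => ENNReal.ofReal (q y), 0 < q y :=
  (ae_withDensity_iff hq.ennreal_ofReal).2 (.of_forall fun _ hy =>
    ENNReal.ofReal_pos.1 (pos_iff_ne_zero.2 hy))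

lemma integral_withDensity_ofReal_eq_setIntegral (hq : Measurable q) (f : α → ℝ) :
    ∫ y, f y ∂μ.withDensity (fun y => ENNReal.ofReal (q y)) =
      ∫ y in {y | 0 < q y}, f y * q y ∂μ := by
  rw [integral_withDensity_eq_integral_toReal_smul hq.ennreal_ofReal (by simp),
    ← setIntegral_eq_integral_of_forall_compl_eq_zero (s := {y | 0 < q y})]
  · refine setIntegral_congr_fun (measurableSet_lt measurable_const hq) fun y hy => ?_
    rw [ENNReal.toReal_ofReal (le_of_lt hy), smul_eq_mul, mul_comm]
  · intro y hy
    rw [ENNReal.ofReal_of_nonpos (not_lt.1 hy), ENNReal.toReal_zero, zero_smul]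

lemma integrableOn_mul_of_integrable_withDensity_ofReal (hq : Measurable q) {f : α → ℝ}
    (hf : Integrable f (μ.withDensity fun y => ENNReal.ofReal (q y))) :
    IntegrableOn (fun y => f y * q y) {y | 0 < q y} μ := by
  rw [integrable_withDensity_iff_integrable_smul' hq.ennreal_ofReal (by simp)] at hf
  refine hf.integrableOn.congr_fun (fun y hy => ?_) (measurableSet_lt measurable_const hq)
  beta_reduce
  rw [ENNReal.toReal_ofReal (le_of_lt hy), smul_eq_mul, mul_comm]

end WithDensity

variable {E : Type*} [NormedAddCommGroup E] [NormedSpace ℝ E] [FiniteDimensional ℝ E]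
  [MeasurableSpace E] [BorelSpace E] {μ : Measure E} [μ.IsAddHaarMeasure] {f q : E → ℝ} {v : E}

theorem integral_fderiv_withDensity_eq_neg (hq : Continuous q)
    (hqd : ∀ y, 0 < q y → DifferentiableAt ℝ q y) (hfd : ∀ y, 0 < q y → DifferentiableAt ℝ f y)
    (hf : Integrable f (μ.withDensity fun y => ENNReal.ofReal (q y)))
    (hf' : Integrable (fun y => fderiv ℝ f y v) (μ.withDensity fun y => ENNReal.ofReal (q y)))
    (hfs : Integrable (fun y => f y * fderiv ℝ (fun z => Real.log (q z)) y v)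
      (μ.withDensity fun y => ENNReal.ofReal (q y))) :
    ∫ y, fderiv ℝ f y v ∂μ.withDensity (fun y => ENNReal.ofReal (q y)) =
      -∫ y, f y * fderiv ℝ (fun z => Real.log (q z)) y v
        ∂μ.withDensity fun y => ENNReal.ofReal (q y) := by
  have hS : MeasurableSet {y | 0 < q y} := measurableSet_lt measurable_const hq.measurable
  have hlog : EqOn (fun y => f y * fderiv ℝ (fun z => Real.log (q z)) y v * q y)
      (fun y => f y * fderiv ℝ q y v) {y | 0 < q y} := by
    intro y (hy : 0 < q y)
    simp only [fderiv.log (hqd y hy) hy.ne', smul_apply, smul_eq_mul]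
    field_simp
  rw [integral_withDensity_ofReal_eq_setIntegral hq.measurable,
    integral_withDensity_ofReal_eq_setIntegral hq.measurable, setIntegral_congr_fun hS hlog,
    setIntegral_mul_fderiv_eq_neg_of_pos hq hqd hfd
      (integrableOn_mul_of_integrable_withDensity_ofReal hq.measurable hf)
      (integrableOn_mul_of_integrable_withDensity_ofReal hq.measurable hf')
      ((integrableOn_mul_of_integrable_withDensity_ofReal hq.measurable hfs).congr_fun hlog hS),
    neg_neg]

end SteinIdentity

section PosteriorStein

variable {E : Type*} [NormedAddCommGroup E] [InnerProductSpace ℝ E]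

lemma fderiv_log_gaussKernel_sub_apply (σ : ℝ) (x y v : E) :
    fderiv ℝ (fun y => Real.log (gaussKernel σ (x - y))) y v = ⟪x - y, v⟫ / σ ^ 2 := by
  have hK := (gaussKernel_pos σ (x - y)).ne'
  rw [((hasFDerivAt_comp_const_sub (hasFDerivAt_gaussKernel σ (x - y))).log hK).fderiv, ← neg_smul,
    neg_neg, smul_smul, inv_mul_eq_div, div_div_cancel_left' hK, smul_apply, innerSL_apply_apply,
    smul_eq_mul, inv_mul_eq_div]

lemma fderiv_log_mul_gaussKernel_sub_div_apply {p : E → ℝ} {σ Z : ℝ} {x y : E} (hZ : Z ≠ 0)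
    (hp : DifferentiableAt ℝ p y) (hpy : p y ≠ 0) (v : E) :
    fderiv ℝ (fun z => Real.log (p z * (gaussKernel σ (x - z) / Z))) y v =
      fderiv ℝ (fun z => Real.log (p z)) y v + ⟪x - y, v⟫ / σ ^ 2 := by
  have hK (z : E) : gaussKernel σ (x - z) ≠ 0 := (gaussKernel_pos σ _).ne'
  have hKdiff : DifferentiableAt ℝ (fun z => Real.log (gaussKernel σ (x - z))) y :=
    (hasFDerivAt_comp_const_sub (hasFDerivAt_gaussKernel σ (x - y))).differentiableAt.log (hK y)
  have hsplit : (fun z => Real.log (p z * (gaussKernel σ (x - z) / Z))) =ᶠ[𝓝 y]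
      fun z => Real.log (p z) + Real.log (gaussKernel σ (x - z)) - Real.log Z := by
    filter_upwards [hp.continuousAt.eventually_ne hpy] with z hz
    rw [← mul_div_assoc, Real.log_div (mul_ne_zero hz (hK z)) hZ, Real.log_mul hz (hK z)]
  rw [hsplit.fderiv_eq, fderiv_sub_const, fderiv_fun_add (hp.log hpy) hKdiff, add_apply,
    fderiv_log_gaussKernel_sub_apply]

lemma hasFDerivAt_inner_sub_div (c : ℝ) (x y v : E) :
    HasFDerivAt (fun y => ⟪x - y, v⟫ / c) (-(c⁻¹ • innerSL ℝ v)) y :=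
  hasFDerivAt_comp_const_sub (hasFDerivAt_inner_div c (x - y) v)

lemma fderiv_inner_sub_div_apply (c : ℝ) (x y v w : E) :
    fderiv ℝ (fun y => ⟪x - y, v⟫ / c) y w = -(⟪v, w⟫ / c) := by
  rw [(hasFDerivAt_inner_sub_div c x y v).fderiv, neg_apply, smul_apply, innerSL_apply_apply,
    smul_eq_mul, inv_mul_eq_div]

variable [MeasurableSpace E] {μ P : Measure E} {p : E → ℝ} {σ : ℝ}

lemma gaussPosterior_eq_withDensity [BorelSpace E] (hp : Measurable p)
    (hP : P = μ.withDensity fun y => ENNReal.ofReal (p y)) (σ : ℝ) (x : E) :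
    gaussPosterior P σ x = μ.withDensity fun y =>
      ENNReal.ofReal (p y * (gaussKernel σ (x - y) / gaussSmoothing P σ x)) := by
  have hK : Measurable fun y => gaussKernel σ (x - y) / gaussSmoothing P σ x :=
    (((contDiff_gaussKernel (n := 0) σ).continuous.comp
      (continuous_sub_left x)).div_const _).measurable
  have hnonneg (y : E) : 0 ≤ gaussKernel σ (x - y) / gaussSmoothing P σ x :=
    div_nonneg (gaussKernel_pos σ _).le (integral_nonneg fun z => (gaussKernel_pos σ _).le)
  calc gaussPosterior P σ x
      = (μ.withDensity fun y => ENNReal.ofReal (p y)).withDensity fun y =>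
          ENNReal.ofReal (gaussKernel σ (x - y) / gaussSmoothing P σ x) := by rw [← hP]; rfl
    _ = _ := by
        rw [← withDensity_mul μ hp.ennreal_ofReal hK.ennreal_ofReal]
        simp only [Pi.mul_def, ENNReal.ofReal_mul' (hnonneg _)]

variable [FiniteDimensional ℝ E] [BorelSpace E] [μ.IsAddHaarMeasure] [IsFiniteMeasure P] [NeZero P]

theorem integral_fderiv_gaussPosterior_eq_neg (hp : Continuous p)
    (hP : P = μ.withDensity fun y => ENNReal.ofReal (p y))
    (hpd : ∀ y, 0 < p y → DifferentiableAt ℝ p y) {f : E → ℝ}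
    (hfd : ∀ y, 0 < p y → DifferentiableAt ℝ f y) {x v : E}
    (hf : Integrable f (gaussPosterior P σ x))
    (hf' : Integrable (fun y => fderiv ℝ f y v) (gaussPosterior P σ x))
    (hfs : Integrable (fun y => f y * fderiv ℝ (fun z => Real.log (p z)) y v)
      (gaussPosterior P σ x))
    (hfu : Integrable (fun y => f y * (⟪x - y, v⟫ / σ ^ 2)) (gaussPosterior P σ x)) :
    ∫ y, fderiv ℝ f y v ∂gaussPosterior P σ x =
      -(∫ y, f y * fderiv ℝ (fun z => Real.log (p z)) y v ∂gaussPosterior P σ x) -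
        ∫ y, f y * (⟪x - y, v⟫ / σ ^ 2) ∂gaussPosterior P σ x := by
  set q := fun y => p y * (gaussKernel σ (x - y) / gaussSmoothing P σ x)
  have hpost : gaussPosterior P σ x = μ.withDensity fun y => ENNReal.ofReal (q y) :=
    gaussPosterior_eq_withDensity hp.measurable hP σ x
  have hKpos (y : E) : 0 < gaussKernel σ (x - y) / gaussSmoothing P σ x :=
    div_pos (gaussKernel_pos σ _) (gaussSmoothing_pos x)
  have hKdiff : ContDiff ℝ 1 fun y => gaussKernel σ (x - y) / gaussSmoothing P σ x :=
    ((contDiff_gaussKernel σ).comp (contDiff_const.sub contDiff_id)).div_const _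
  have hqp {y : E} : 0 < q y ↔ 0 < p y := mul_pos_iff_of_pos_right (hKpos y)
  have hlog : (fun y => f y * fderiv ℝ (fun z => Real.log (q z)) y v) =ᵐ[gaussPosterior P σ x]
      fun y => f y * fderiv ℝ (fun z => Real.log (p z)) y v + f y * (⟪x - y, v⟫ / σ ^ 2) := by
    rw [hpost]
    filter_upwards [ae_pos_withDensity_ofReal (hp.mul hKdiff.continuous).measurable] with y hy
    rw [fderiv_log_mul_gaussKernel_sub_div_apply (gaussSmoothing_pos x).ne' (hpd y (hqp.1 hy))
      (hqp.1 hy).ne', mul_add]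
  have hstein := integral_fderiv_withDensity_eq_neg (μ := μ) (q := q) (hp.mul hKdiff.continuous)
    (fun y hy => (hpd y (hqp.1 hy)).mul (hKdiff.differentiable one_ne_zero y))
    (fun y hy => hfd y (hqp.1 hy)) (hpost ▸ hf) (hpost ▸ hf')
    (hpost ▸ (hfs.add hfu).congr hlog.symm)
  rw [← hpost, integral_congr_ae hlog, integral_add hfs hfu] at hstein
  linarith

end PosteriorStein

section PosteriorHessian

variable {E : Type*} [NormedAddCommGroup E] [InnerProductSpace ℝ E] [FiniteDimensional ℝ E]
  [MeasurableSpace E] [BorelSpace E] {μ P : Measure E} [μ.IsAddHaarMeasure] [IsFiniteMeasure P]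
  [NeZero P] {p : E → ℝ} {σ : ℝ} {x v w : E}

lemma integral_fderiv_log_gaussPosterior (hσ : σ ≠ 0) (hp : Continuous p)
    (hP : P = μ.withDensity fun y => ENNReal.ofReal (p y))
    (hpd : ∀ y, 0 < p y → DifferentiableAt ℝ p y)
    (hs : Integrable (fun y => fderiv ℝ (fun z => Real.log (p z)) y v) (gaussPosterior P σ x)) :
    ∫ y, fderiv ℝ (fun z => Real.log (p z)) y v ∂gaussPosterior P σ x =
      -∫ y, ⟪x - y, v⟫ / σ ^ 2 ∂gaussPosterior P σ x := by
  have hu := (memLp_two_inner_sub_gaussPosterior (P := P) hσ x v).integrable one_le_two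
  have hstein := integral_fderiv_gaussPosterior_eq_neg (f := fun _ => 1) (v := v) hp hP hpd
    (fun _ _ => differentiableAt_const _) (integrable_const _) (by simp) (by simpa using hs)
    (by simpa using hu)
  simp only [fderiv_fun_const, Pi.zero_apply, zero_apply, integral_zero, one_mul] at hstein
  linarith

lemma integral_inner_mul_fderiv_log_gaussPosterior (hσ : σ ≠ 0) (hp : Continuous p)
    (hP : P = μ.withDensity fun y => ENNReal.ofReal (p y))
    (hpd : ∀ y, 0 < p y → DifferentiableAt ℝ p y)
    (hs : MemLp (fun y => fderiv ℝ (fun z => Real.log (p z)) y w) 2 (gaussPosterior P σ x)) :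
    ∫ y, ⟪x - y, v⟫ / σ ^ 2 * fderiv ℝ (fun z => Real.log (p z)) y w ∂gaussPosterior P σ x =
      ⟪v, w⟫ / σ ^ 2 -
        ∫ y, ⟪x - y, v⟫ / σ ^ 2 * (⟪x - y, w⟫ / σ ^ 2) ∂gaussPosterior P σ x := by
  have hu (v : E) := memLp_two_inner_sub_gaussPosterior (P := P) hσ x v
  have hstein := integral_fderiv_gaussPosterior_eq_neg (v := w) hp hP hpd
    (fun y _ => (hasFDerivAt_inner_sub_div (σ ^ 2) x y v).differentiableAt)
    ((hu v).integrable one_le_two) (by simp only [fderiv_inner_sub_div_apply, integrable_const])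
    ((hu v).integrable_mul hs) ((hu v).integrable_mul (hu w))
  simp only [fderiv_inner_sub_div_apply, integral_const, probReal_univ, one_smul] at hstein
  linarith

theorem hessForm_log_gaussSmoothing_of_density (hσ : σ ≠ 0) (hp : Continuous p)
    (hP : P = μ.withDensity fun y => ENNReal.ofReal (p y))
    (hpd : ∀ y, 0 < p y → ContDiffAt ℝ 2 p y)
    (hsv : MemLp (fun y => fderiv ℝ (fun z => Real.log (p z)) y v) 2 (gaussPosterior P σ x))
    (hsw : MemLp (fun y => fderiv ℝ (fun z => Real.log (p z)) y w) 2 (gaussPosterior P σ x))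
    (hh : Integrable (fun y => hessForm (fun z => Real.log (p z)) y v w)
      (gaussPosterior P σ x)) :
    hessForm (fun z => Real.log (gaussSmoothing P σ z)) x v w =
      ∫ y, hessForm (fun z => Real.log (p z)) y v w ∂gaussPosterior P σ x +
        cov[fun y => fderiv ℝ (fun z => Real.log (p z)) y v,
          fun y => fderiv ℝ (fun z => Real.log (p z)) y w; gaussPosterior P σ x] := by
  have hu (v : E) := memLp_two_inner_sub_gaussPosterior (P := P) hσ x v
  have hpd' (y : E) (hy : 0 < p y) : DifferentiableAt ℝ p y :=
    (hpd y hy).differentiableAt two_ne_zero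
  have hmean_v := integral_fderiv_log_gaussPosterior hσ hp hP hpd' (hsv.integrable one_le_two)
  have hmean_w := integral_fderiv_log_gaussPosterior hσ hp hP hpd' (hsw.integrable one_le_two)
  have hcross := integral_inner_mul_fderiv_log_gaussPosterior (v := v) hσ hp hP hpd' hsw
  have hhess := integral_fderiv_gaussPosterior_eq_neg hp hP hpd'
    (fun y hy => differentiableAt_fderiv_log_apply (hpd y hy) hy.ne' w)
    (hsw.integrable one_le_two) hh (hsw.integrable_mul hsv) (hsw.integrable_mul (hu v))
  rw [hessForm_log_gaussSmoothing hσ, covariance_eq_sub (hu v) (hu w), covariance_eq_sub hsv hsw,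
    hmean_v, hmean_w]
  simp only [hessForm, Pi.mul_apply, mul_comm] at hhess hcross ⊢
  linarith

end PosteriorHessian

section Tilted

variable {α : Type*} [MeasurableSpace α] {μ : Measure α}

lemma tilted_eq_inv_smul_withDensity [NeZero μ] {f : α → ℝ}
    (hf : Integrable (fun y => Real.exp (f y)) μ) :
    μ.tilted f = (μ.withDensity (fun y => ENNReal.ofReal (Real.exp (f y))) univ)⁻¹ •
      μ.withDensity fun y => ENNReal.ofReal (Real.exp (f y)) := by
  have hZ : 0 < ∫ y, Real.exp (f y) ∂μ := integral_exp_pos hf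
  have hmass : μ.withDensity (fun y => ENNReal.ofReal (Real.exp (f y))) univ =
      ENNReal.ofReal (∫ y, Real.exp (f y) ∂μ) := by
    rw [withDensity_apply _ .univ, setLIntegral_univ,
      ofReal_integral_eq_lintegral_ofReal hf (.of_forall fun y => (Real.exp_pos _).le)]
  rw [hmass, ← withDensity_smul' _ _ (ENNReal.inv_ne_top.2 (ENNReal.ofReal_pos.2 hZ).ne'),
    Measure.tilted]
  congr with y
  rw [ENNReal.ofReal_div_of_pos hZ, ENNReal.div_eq_inv_mul, Pi.smul_apply, smul_eq_mul]

end Tilted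

section EuclideanCoordinates

variable {d : ℕ} {P : Measure (Vec d)} {σ : ℝ} {x : Vec d} {i j : Fin d}

lemma hessEntry_log_perturbDensity [IsFiniteMeasure P] [NeZero P] (hσ : σ ≠ 0) :
    hessEntry (fun z => Real.log (perturbDensity d P σ z)) x i j =
      hessForm (fun z => Real.log (gaussSmoothing P σ z)) x (EuclideanSpace.single i 1)
        (EuclideanSpace.single j 1) := by
  have hc : (2 * π * σ ^ 2) ^ (-(d : ℝ) / 2) ≠ 0 := by positivity
  exact congr_fun₃ (hessForm_log_const_mul hc fun z => (gaussSmoothing_pos z).ne') x _ _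

lemma tiltMeasure_one_eq_gaussPosterior [IsFiniteMeasure P] [NeZero P] :
    tiltMeasure d P 1 σ x = gaussPosterior P σ x := by
  rw [gaussPosterior, tilted_eq_inv_smul_withDensity (integrable_gaussKernel_sub P σ x)]
  simp only [tiltMeasure, one_smul]

lemma scoreOf_apply (p : Vec d → ℝ) (y : Vec d) (i : Fin d) :
    scoreOf p y i = fderiv ℝ (fun z => Real.log (p z)) y (EuclideanSpace.single i 1) := by
  rw [scoreOf, ← inner_gradient_left, EuclideanSpace.inner_single_right]
  simp

lemma memLp_two_scoreOf_apply {ν : Measure (Vec d)} {p : Vec d → ℝ}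
    (hs : Integrable (fun y => ‖scoreOf p y‖ ^ 2) ν) (i : Fin d) :
    MemLp (fun y => scoreOf p y i) 2 ν := by
  have hmeas : Measurable fun y => scoreOf p y i := by
    simp_rw [scoreOf_apply]
    exact measurable_fderiv_apply_const ℝ _ _
  rw [memLp_two_iff_integrable_sq_norm hmeas.aestronglyMeasurable]
  refine hs.mono' (hmeas.norm.pow_const 2).aestronglyMeasurable (.of_forall fun y => ?_)
  rw [norm_pow, norm_norm]
  gcongr
  exact PiLp.norm_apply_le _ i

end EuclideanCoordinates

theorem statement18_general {d : ℕ} {σ : ℝ} (P : Measure (Vec d)) [IsFiniteMeasure P] [NeZero P]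
    (hσ : σ ≠ 0) (x : Vec d) (i j : Fin d) :
    hessEntry (fun z => Real.log (perturbDensity d P σ z)) x i j =
        ((∫ y, (y i / σ ^ 2) * (y j / σ ^ 2) ∂(tiltMeasure d P 1 σ x)) -
            (∫ y, y i / σ ^ 2 ∂(tiltMeasure d P 1 σ x)) *
              (∫ y, y j / σ ^ 2 ∂(tiltMeasure d P 1 σ x))) -
          (if i = j then 1 else 0) / σ ^ 2 ∧
      ∀ p : Vec d → ℝ, P = volume.withDensity (fun y => ENNReal.ofReal (p y)) → Continuous p →
        (∀ y, 0 < p y → ContDiffAt ℝ 2 p y) →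
        Integrable (fun y => ‖scoreOf p y‖ ^ 2) (tiltMeasure d P 1 σ x) →
        Integrable (fun y => hessEntry (fun z => Real.log (p z)) y i j) (tiltMeasure d P 1 σ x) →
        hessEntry (fun z => Real.log (perturbDensity d P σ z)) x i j =
          (∫ y, hessEntry (fun z => Real.log (p z)) y i j ∂(tiltMeasure d P 1 σ x)) +
            ((∫ y, scoreOf p y i * scoreOf p y j ∂(tiltMeasure d P 1 σ x)) -
              (∫ y, scoreOf p y i ∂(tiltMeasure d P 1 σ x)) *
                (∫ y, scoreOf p y j ∂(tiltMeasure d P 1 σ x))) := by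
  rw [tiltMeasure_one_eq_gaussPosterior, hessEntry_log_perturbDensity hσ]
  refine ⟨?_, fun p hP hp hpd hs hh => ?_⟩
  · have hcoord (k : Fin d) := memLp_two_inner_gaussPosterior (P := P) hσ x
      (EuclideanSpace.single k (1 : ℝ))
    rw [hessForm_log_gaussSmoothing hσ, covariance_inner_sub_gaussPosterior hσ,
      covariance_eq_sub (hcoord i) (hcoord j)]
    simp [EuclideanSpace.inner_single_right, Pi.mul_apply, eq_comm (a := j)]
  · have hscore (k : Fin d) := memLp_two_scoreOf_apply hs k
    simp only [scoreOf_apply] at hscore ⊢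
    rw [hessForm_log_gaussSmoothing_of_density hσ hp hP hpd (hscore i) (hscore j) hh,
      covariance_eq_sub (hscore i) (hscore j)]
    rfl

/-- Lemma `computing-second-score`: two representations of the Hessian
`∇²log p_σ` of a Gaussian perturbation, stated entrywise, via the tilted measure
`P̃_σ(·|x)`. -/
theorem statement18 :
    ∀ (d : ℕ) (σ : ℝ) (P : Measure (Vec d)),
      IsProbabilityMeasure P → 0 < σ →
      -- (1) `∇²log p_σ(x) = Var_{P̃}(y/σ²) − I_d/σ²`
      (∀ (x : Vec d) (i j : Fin d),
        hessEntry (fun z => Real.log (perturbDensity d P σ z)) x i j =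
          ((∫ y, (y i / σ ^ 2) * (y j / σ ^ 2) ∂(tiltMeasure d P 1 σ x)) -
              (∫ y, y i / σ ^ 2 ∂(tiltMeasure d P 1 σ x)) *
                (∫ y, y j / σ ^ 2 ∂(tiltMeasure d P 1 σ x))) -
            (if i = j then 1 else 0) / σ ^ 2) ∧
      -- (2) if `P` has a `C²` density `p` with the integration by parts justified, then
      -- `∇²log p_σ(x) = E_{P̃}[∇²log p] + Var_{P̃}(∇log p)`
      (∀ p : Vec d → ℝ,
        P = MeasureTheory.volume.withDensity (fun y => ENNReal.ofReal (p y)) →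
        ContDiff ℝ 2 p →
        (∀ x : Vec d, Integrable
          (fun y => Real.exp (-‖x - y‖ ^ 2 / (2 * σ ^ 2)) • gradient p y)
          MeasureTheory.volume) →
        (∀ (x : Vec d) (i j : Fin d), Integrable
          (fun y => Real.exp (-‖x - y‖ ^ 2 / (2 * σ ^ 2)) * hessEntry p y i j)
          MeasureTheory.volume) →
        (∀ x : Vec d, Integrable (fun y => ‖scoreOf p y‖ ^ 2) (tiltMeasure d P 1 σ x)) →
        (∀ (x : Vec d) (i j : Fin d), Integrable
          (fun y => hessEntry (fun z => Real.log (p z)) y i j) (tiltMeasure d P 1 σ x)) →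
        ∀ (x : Vec d) (i j : Fin d),
          hessEntry (fun z => Real.log (perturbDensity d P σ z)) x i j =
            (∫ y, hessEntry (fun z => Real.log (p z)) y i j ∂(tiltMeasure d P 1 σ x)) +
              ((∫ y, scoreOf p y i * scoreOf p y j ∂(tiltMeasure d P 1 σ x)) -
                (∫ y, scoreOf p y i ∂(tiltMeasure d P 1 σ x)) *
                  (∫ y, scoreOf p y j ∂(tiltMeasure d P 1 σ x)))) :=
  fun _ _ P _ hσ => ⟨fun x i j => (statement18_general P hσ.ne' x i j).1,
    fun p hP hp _ _ hs hh x i j => (statement18_general P hσ.ne' x i j).2 p hP hp.continuous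
      (fun _ _ => hp.contDiffAt) (hs x) (hh x i j)⟩

end DiffusionKL
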